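/- arXiv:1310.0081 — 2 statements merged into one kernel-verified Lean document; each statement's English description precedes it below -/
import Mathlib

section
/- Let Ω ⊆ ℝ² be open and let X, Y : Ω → ℝ² be real-analytic vector fields. Assume Y tracks X, i.e. there is a continuous function f : Ω → ℝ such that DX(p)(Y(p)) − DY(p)(X(p)) = f(p) • X(p) for all p ∈ Ω. Let U ⊆ Ω be a connected open set whose closure cl U is compact and contained in Ω, let K := {p ∈ cl U : X(p) = 0}, and assume K ⊆ U. Assume moreover that K is essential: there exists ε > 0 such that every continuous map X' : cl U → ℝ² with ‖X'(p) − X(p)‖ < ε for all p ∈ cl U has a zero in cl U. Then there exists p ∈ K with Y(p) = 0. -/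
open Set

/-!
Along the flow of `Y`, the tracking equation makes `X` satisfy a linear differential inequality, and
likewise the area `ω X Y` spanned by the two fields. Hence near a point where `Y ≠ 0` both change
only by a relative factor close to `1` along short flow lines, and their behaviour can be read off
from a segment transversal to `Y`. There `X` is an analytic curve, so `X` has a limiting direction
`z` at each of its zeros. If `z` is not parallel to `Y`, then `X = O(ω X Y)`; if it is,
then `ω X Y = o(X)`. Both alternatives persist at nearby zeros: in the second case because zeros of
`X` are isolated on the transversal, so that nearby ones lie on the flow line of the given one.

If `Y` had no zero on `K`, one could therefore choose a continuous `V` equal to `Y` at zeros of the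
first kind and to `Y` rotated by a right angle at those of the second kind. Near `K`, the field
`V` does not vanish and `X` is never a nonzero multiple of it, so `X + d • V` has no zero for small
`d ≠ 0`, and `K` is not essential.
-/

open Asymptotics Filter Module Topology VectorField
open scoped InnerProductSpace

section Growth

variable {F : Type*} [NormedAddCommGroup F] [NormedSpace ℝ F] {C b : ℝ} {g g' : ℝ → F}

theorem norm_sub_le_exp_mul_sub_one_mul_of_nonneg (hC : 0 ≤ C) (hb : 0 ≤ b)
    (hg : ∀ t ∈ Icc 0 b, HasDerivAt g (g' t) t) (hbound : ∀ t ∈ Icc 0 b, ‖g' t‖ ≤ C * ‖g t‖) :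
    ‖g b - g 0‖ ≤ (Real.exp (C * b) - 1) * ‖g 0‖ := by
  have hbound' : ∀ t ∈ Ico 0 b, ‖g' t‖ ≤ C * ‖g t - g 0‖ + C * ‖g 0‖ := fun t ht ↦
    calc ‖g' t‖ ≤ C * ‖g t‖ := hbound t (Ico_subset_Icc_self ht)
      _ ≤ C * (‖g t - g 0‖ + ‖g 0‖) := by gcongr; exact norm_le_norm_sub_add _ _
      _ = C * ‖g t - g 0‖ + C * ‖g 0‖ := mul_add ..
  have hgronwall := norm_le_gronwallBound_of_norm_deriv_right_le (f := fun t ↦ g t - g 0) (δ := 0)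
    (fun t ht ↦ ((hg t ht).sub_const _).continuousAt.continuousWithinAt)
    (fun t ht ↦ ((hg t (Ico_subset_Icc_self ht)).sub_const _).hasDerivWithinAt)
    (by simp) hbound' b (right_mem_Icc.2 hb)
  rcases hC.eq_or_lt with rfl | hC
  · simpa [gronwallBound_K0] using hgronwall
  · simpa [gronwallBound_of_K_ne_0 hC.ne', mul_div_cancel_left₀ _ hC.ne', mul_comm ‖g 0‖]
      using hgronwall

theorem norm_sub_le_exp_mul_abs_sub_one_mul (hC : 0 ≤ C)
    (hg : ∀ t ∈ uIcc 0 b, HasDerivAt g (g' t) t) (hbound : ∀ t ∈ uIcc 0 b, ‖g' t‖ ≤ C * ‖g t‖) :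
    ‖g b - g 0‖ ≤ (Real.exp (C * |b|) - 1) * ‖g 0‖ := by
  rcases le_total 0 b with hb | hb
  · rw [uIcc_of_le hb] at hg hbound
    rw [abs_of_nonneg hb]
    exact norm_sub_le_exp_mul_sub_one_mul_of_nonneg hC hb hg hbound
  · rw [uIcc_of_ge hb] at hg hbound
    have hneg : ∀ t ∈ Icc 0 (-b), -t ∈ Icc b 0 := fun t ht ↦
      ⟨by linarith [ht.2], by linarith [ht.1]⟩
    have hreflected := norm_sub_le_exp_mul_sub_one_mul_of_nonneg (g := fun t ↦ g (-t))
      (g' := fun t ↦ -g' (-t)) hC (neg_nonneg.2 hb)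
      (fun t ht ↦ by simpa [Function.comp_def] using (hg _ (hneg t ht)).scomp t (hasDerivAt_neg t))
      (fun t ht ↦ by simpa using hbound _ (hneg t ht))
    simpa [abs_of_nonpos hb] using hreflected

end Growth

section Product

variable {α : Type*} [TopologicalSpace α] {x : α} {t₀ : ℝ}

theorem eventually_forall_mem_uIcc {P : α × ℝ → Prop} (hP : ∀ᶠ z in 𝓝 (x, t₀), P z) :
    ∀ᶠ z in 𝓝 (x, t₀), ∀ s ∈ uIcc t₀ z.2, P (z.1, s) := by
  rw [nhds_prod_eq] at hP ⊢
  obtain ⟨Q, hQ, R, hR, hQR⟩ := eventually_prod_iff.1 hP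
  have hsmall : Tendsto (fun t ↦ uIcc t₀ t) (𝓝 t₀) (𝓝 t₀).smallSets :=
    tendsto_const_nhds.uIcc tendsto_id
  have hR' : ∀ᶠ t in 𝓝 t₀, ∀ s ∈ uIcc t₀ t, R s :=
    hsmall.eventually (p := fun S ↦ ∀ s ∈ S, R s)
      (eventually_smallSets.2 ⟨_, hR, fun _ ht _ hs ↦ ht hs⟩)
  filter_upwards [hQ.prod_mk hR'] with z hz s hs
  exact hQR hz.1 (hz.2 s hs)

theorem eventually_exists_eq_zero_of_hasDerivAt_pos {h : α × ℝ → ℝ} {m : ℝ}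
    (hcont : ∀ᶠ z in 𝓝 (x, t₀), ContinuousAt h z) (hzero : h (x, t₀) = 0)
    (hderiv : HasDerivAt (fun s ↦ h (x, s)) m t₀) (hm : 0 < m)
    {N : Set (α × ℝ)} (hN : N ∈ 𝓝 (x, t₀)) :
    ∀ᶠ y in 𝓝 x, ∃ s, (y, s) ∈ N ∧ h (y, s) = 0 := by
  have hgood : ∀ᶠ z in 𝓝 (x, t₀), ContinuousAt h z ∧ z ∈ N := hcont.and hN
  rw [nhds_prod_eq] at hgood
  obtain ⟨Q, hQ, R, hR, hQR⟩ := eventually_prod_iff.1 hgood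
  obtain ⟨δ, hδ, hRδ⟩ := Metric.eventually_nhds_iff_ball.1 hR
  have hsign := eventually_nhdsWithin_sign_eq_of_deriv_pos (hderiv.deriv.symm ▸ hm) hzero
  have hnear : ∀ᶠ s in 𝓝 t₀, s ∈ Metric.ball t₀ δ ∧
      SignType.sign (h (x, s)) = SignType.sign (s - t₀) :=
    Eventually.and (Metric.ball_mem_nhds t₀ hδ) hsign
  obtain ⟨a, ⟨haδ, ha⟩, hat : a < t₀⟩ :=
    ((hnear.filter_mono nhdsWithin_le_nhds).and (self_mem_nhdsWithin (s := Iio t₀))).exists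
  obtain ⟨b, ⟨hbδ, hb⟩, htb : t₀ < b⟩ :=
    ((hnear.filter_mono nhdsWithin_le_nhds).and (self_mem_nhdsWithin (s := Ioi t₀))).exists
  rw [sign_neg (sub_neg.2 hat), sign_eq_neg_one_iff] at ha
  rw [sign_pos (sub_pos.2 htb), sign_eq_one_iff] at hb
  have hsub : ∀ s ∈ Icc a b, R s := fun s hs ↦
    hRδ s ((convex_ball t₀ δ).ordConnected.out haδ hbδ hs)
  have hslice : ∀ s ∈ Icc a b, ContinuousAt (fun y ↦ h (y, s)) x := fun s hs ↦
    (hQR hQ.self_of_nhds (hsub s hs)).1.comp (f := fun y ↦ (y, s)) (by fun_prop)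
  have hab : a ≤ b := (hat.trans htb).le
  filter_upwards [hQ, (hslice a (left_mem_Icc.2 hab)).eventually_lt_const ha,
    (hslice b (right_mem_Icc.2 hab)).eventually_const_lt hb] with y hy hya hyb
  have hline : ContinuousOn (fun s ↦ h (y, s)) (Icc a b) := fun s hs ↦
    ((hQR hy (hsub s hs)).1.comp (f := fun s ↦ (y, s)) (by fun_prop)).continuousWithinAt
  obtain ⟨s, hs, hs0⟩ := intermediate_value_Icc hab hline ⟨hya.le, hyb.le⟩
  exact ⟨s, (hQR hy (hsub s hs)).2, hs0⟩

end Product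

section Flow

variable {E F : Type*} [NormedAddCommGroup E] [NormedSpace ℝ E] [NormedAddCommGroup F]
  [NormedSpace ℝ F] {X Y : E → E} {φ : E × ℝ → E} {p : E}

/-- `φ` is a local flow of `Y` near `p`, with `φ (x, t)` the point reached from `x` at time `t`.
Only the germ of `φ` at `(p, 0)` matters. -/
def IsLocalFlowAt (φ : E × ℝ → E) (Y : E → E) (p : E) : Prop :=
  ∀ᶠ z in 𝓝 (p, (0 : ℝ)), ContinuousAt φ z ∧ φ (z.1, 0) = z.1 ∧
    HasDerivAt (fun s ↦ φ (z.1, s)) (Y (φ z)) z.2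

theorem exists_isLocalFlowAt [CompleteSpace E] (hY : ContDiffAt ℝ 1 Y p) :
    ∃ φ, IsLocalFlowAt φ Y p := by
  obtain ⟨ε, hε, a, r, L, K, hr, hPL⟩ := IsPicardLindelof.of_contDiffAt_one hY
  obtain ⟨φ, hφ, hcont⟩ :=
    (hPL 0).exists_forall_mem_closedBall_eq_hasDerivWithinAt_continuousOn
  simp only [zero_sub, zero_add] at hφ hcont
  have hnhds : Metric.closedBall p (r : ℝ) ×ˢ Icc (-ε) ε ∈ 𝓝 (p, (0 : ℝ)) :=
    prod_mem_nhds (Metric.closedBall_mem_nhds p hr) (Icc_mem_nhds (neg_lt_zero.2 hε) hε)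
  refine ⟨φ, ?_⟩
  filter_upwards [eventually_eventually_nhds.2 hnhds] with z hz
  have hmem := hz.self_of_nhds
  have htime : Icc (-ε) ε ∈ 𝓝 z.2 := mem_of_superset
    ((Continuous.prodMk_right z.1).continuousAt.eventually hz) fun _ hs ↦ hs.2
  exact ⟨hcont.continuousAt hz, (hφ z.1 hmem.1).1,
    ((hφ z.1 hmem.1).2 z.2 hmem.2).hasDerivAt htime⟩

namespace IsLocalFlowAt

theorem apply_zero (hφ : IsLocalFlowAt φ Y p) : φ (p, 0) = p :=
  hφ.self_of_nhds.2.1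

theorem tendsto (hφ : IsLocalFlowAt φ Y p) : Tendsto φ (𝓝 (p, 0)) (𝓝 p) := by
  simpa only [ContinuousAt, hφ.apply_zero] using hφ.self_of_nhds.1

-- Grönwall: along the flow, `‖g'‖ ≤ C * ‖g‖`.
theorem comp_isEquivalent (hφ : IsLocalFlowAt φ Y p) {g : E → F}
    (hg : ∀ᶠ q in 𝓝 p, DifferentiableAt ℝ g q)
    (hderiv : (fun q ↦ fderiv ℝ g q (Y q)) =O[𝓝 p] g) :
    (fun z ↦ g (φ z)) ~[𝓝 (p, 0)] fun z ↦ g z.1 := by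
  obtain ⟨C, hC, hbound⟩ := hderiv.exists_nonneg
  rw [IsEquivalent, isLittleO_iff]
  intro κ hκ
  have hsmall : ∀ᶠ z : E × ℝ in 𝓝 (p, 0), Real.exp (C * |z.2|) - 1 < κ := by
    have hcont : Continuous fun z : E × ℝ ↦ Real.exp (C * |z.2|) - 1 := by fun_prop
    exact hcont.continuousAt.eventually_lt_const (by simpa using hκ)
  filter_upwards [hsmall, eventually_forall_mem_uIcc
    (hφ.and (hφ.tendsto.eventually (hg.and hbound.bound)))] with z hz horbit
  have hinit : φ (z.1, 0) = z.1 := (horbit 0 left_mem_uIcc).1.2.1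
  have hgrowth := norm_sub_le_exp_mul_abs_sub_one_mul (g := fun s ↦ g (φ (z.1, s))) hC
    (fun s hs ↦ (horbit s hs).2.1.hasFDerivAt.comp_hasDerivAt s (horbit s hs).1.2.2)
    (fun s hs ↦ (horbit s hs).2.2)
  rw [hinit] at hgrowth
  exact hgrowth.trans (by gcongr)

end IsLocalFlowAt

/-- `Y` tracks `X` near `p`: the bracket `[Y, X]` is a multiple of `X` there. The coefficient need
only be bounded near `p`, not continuous. -/
def TracksAt (Y X : E → E) (p : E) : Prop :=
  ∃ f : E → ℝ, (f =O[𝓝 p] fun _ ↦ (1 : ℝ)) ∧ ∀ᶠ q in 𝓝 p, lieBracket ℝ Y X q = f q • X q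

theorem TracksAt.of_continuousOn {Ω : Set E} {f : E → ℝ} (hΩ : IsOpen Ω) (hf : ContinuousOn f Ω)
    (hbracket : ∀ q ∈ Ω, lieBracket ℝ Y X q = f q • X q) (hp : p ∈ Ω) : TracksAt Y X p :=
  have hΩp := hΩ.mem_nhds hp
  ⟨f, (hf.continuousAt hΩp).tendsto.isBigO_one ℝ, eventually_of_mem hΩp hbracket⟩

theorem TracksAt.fderiv_isBigO (htrack : TracksAt Y X p) (hY : ContDiffAt ℝ 1 Y p) :
    (fun q ↦ fderiv ℝ X q (Y q)) =O[𝓝 p] X := by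
  obtain ⟨f, hf, hbracket⟩ := htrack
  have hYX : (fun q ↦ fderiv ℝ Y q (X q)) =O[𝓝 p] X := by
    have hle : (fun q ↦ fderiv ℝ Y q (X q)) =O[𝓝 p] fun q ↦ ‖fderiv ℝ Y q‖ * ‖X q‖ :=
      isBigO_of_le _ fun q ↦ by simpa using (fderiv ℝ Y q).le_opNorm (X q)
    simpa using hle.trans
      (((hY.continuousAt_fderiv one_ne_zero).tendsto.isBigO_one ℝ).norm_left.mul
        (isBigO_refl X (𝓝 p)).norm_norm)
  have hfX : (fun q ↦ f q • X q) =O[𝓝 p] X := by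
    simpa using hf.smul (isBigO_refl X (𝓝 p))
  refine (hYX.add hfX).congr' ?_ EventuallyEq.rfl
  filter_upwards [hbracket] with q hq
  rw [← hq, lieBracket, add_sub_cancel]

end Flow

theorem IsLocalFlowAt.eventually_exists_inner_eq_zero {E : Type*} [NormedAddCommGroup E]
    [InnerProductSpace ℝ E] {Y : E → E} {φ : E × ℝ → E} {p : E} (hφ : IsLocalFlowAt φ Y p)
    (hYp : Y p ≠ 0) {N : Set (E × ℝ)} (hN : N ∈ 𝓝 (p, 0)) :
    ∀ᶠ q in 𝓝 p, ∃ s, (q, s) ∈ N ∧ ⟪Y p, φ (q, s) - p⟫_ℝ = 0 := by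
  refine eventually_exists_eq_zero_of_hasDerivAt_pos (h := fun z ↦ ⟪Y p, φ z - p⟫_ℝ)
    (hφ.mono fun z hz ↦ ?_) (by simp [hφ.apply_zero]) ?_ (real_inner_self_pos.2 hYp) hN
  · exact continuousAt_const.inner (hz.1.sub continuousAt_const)
  · have hderiv := hφ.self_of_nhds.2.2.sub_const p
    rw [hφ.apply_zero] at hderiv
    simpa using (hasDerivAt_const (0 : ℝ) (Y p)).inner ℝ hderiv

section AreaForm

variable {E : Type*} [NormedAddCommGroup E] [InnerProductSpace ℝ E] [Fact (finrank ℝ E = 2)]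
  (o : Orientation ℝ E (Fin 2))

local notation "ω" => o.areaForm
local notation "J" => o.rightAngleRotation

theorem areaForm_smul_add_areaForm_smul_add_areaForm_smul_eq_zero (x y z : E) :
    ω x y • z + ω y z • x + ω z x • y = 0 := by
  rcases eq_or_ne x 0 with rfl | hx
  · simp
  have hscaled : ‖x‖ ^ 2 • (ω x y • z + ω y z • x + ω z x • y) = 0 := by
    refine ext_inner_right ℝ fun v ↦ ?_
    simp only [inner_add_left, real_inner_smul_left, inner_zero_left]
    rw [o.areaForm_swap z x]
    linear_combination
      (-ω x y) * o.inner_mul_inner_add_areaForm_mul_areaForm x z v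
      + ω x z * o.inner_mul_inner_add_areaForm_mul_areaForm x y v
      - ⟪x, v⟫_ℝ * o.inner_mul_areaForm_sub x y z
  exact (smul_eq_zero.1 hscaled).resolve_left (by positivity)

theorem normSq_smul_eq_inner_smul_add_areaForm_smul (v w : E) :
    ‖v‖ ^ 2 • w = ⟪v, w⟫_ℝ • v + ω v w • J v := by
  refine ext_inner_right ℝ fun y ↦ ?_
  simp only [inner_add_left, real_inner_smul_left, o.inner_rightAngleRotation_left,
    o.inner_mul_inner_add_areaForm_mul_areaForm]

-- The left-hand side is `|tr A * ω v w|`.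
theorem abs_areaForm_apply_add_areaForm_apply_le (A : E →L[ℝ] E) (v w : E) :
    |ω (A v) w + ω v (A w)| ≤ 2 * ‖A‖ * |ω v w| := by
  rcases eq_or_ne v 0 with rfl | hv
  · simp
  have hscaled : ‖v‖ ^ 2 * (ω (A v) w + ω v (A w)) =
      ω v w * (ω (A v) (J v) + ω v (A (J v))) := by
    have hw := normSq_smul_eq_inner_smul_add_areaForm_smul o v w
    have h₁ := congrArg (ω (A v)) hw
    have h₂ := congrArg (fun x ↦ ω v (A x)) hw
    simp only [map_add, map_smul, smul_eq_mul] at h₁ h₂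
    linear_combination h₁ + h₂ + ⟪v, w⟫_ℝ * o.areaForm_swap v (A v)
  have hbound : |ω (A v) (J v) + ω v (A (J v))| ≤ ‖v‖ ^ 2 * (2 * ‖A‖) := by
    have hJ : ‖A (J v)‖ ≤ ‖A‖ * ‖v‖ := by simpa using A.le_opNorm (J v)
    calc |ω (A v) (J v) + ω v (A (J v))|
        ≤ ‖A v‖ * ‖J v‖ + ‖v‖ * ‖A (J v)‖ := (abs_add_le _ _).trans
          (add_le_add (o.abs_areaForm_le _ _) (o.abs_areaForm_le _ _))
      _ ≤ (‖A‖ * ‖v‖) * ‖v‖ + ‖v‖ * (‖A‖ * ‖v‖) := by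
        rw [LinearIsometryEquiv.norm_map]
        gcongr
        exact A.le_opNorm v
      _ = ‖v‖ ^ 2 * (2 * ‖A‖) := by ring
  refine le_of_mul_le_mul_left ?_ (show 0 < ‖v‖ ^ 2 by positivity)
  calc ‖v‖ ^ 2 * |ω (A v) w + ω v (A w)|
      = |ω v w| * |ω (A v) (J v) + ω v (A (J v))| := by
        rw [← abs_mul, ← hscaled, abs_mul, abs_of_nonneg (sq_nonneg ‖v‖)]
    _ ≤ |ω v w| * (‖v‖ ^ 2 * (2 * ‖A‖)) := by gcongr
    _ = ‖v‖ ^ 2 * (2 * ‖A‖ * |ω v w|) := by ring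

theorem isBigO_areaForm_right {α : Type*} {l : Filter α} {X : α → E} (z : E) :
    (fun q ↦ ω z (X q)) =O[l] X :=
  .of_bound ‖z‖ (.of_forall fun q ↦ o.abs_areaForm_le z (X q))

theorem tendsto_areaForm {α : Type*} {l : Filter α} {X Y : α → E} {x y : E}
    (hX : Tendsto X l (𝓝 x)) (hY : Tendsto Y l (𝓝 y)) :
    Tendsto (fun q ↦ ω (X q) (Y q)) l (𝓝 (ω x y)) := by
  simpa [Function.comp_def] using
    (o.areaForm'.isBoundedBilinearMap.continuous.tendsto (x, y)).comp (hX.prodMk_nhds hY)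

variable {X Y : E → E} {p : E}

theorem hasFDerivAt_areaForm_apply {X' Y' : E →L[ℝ] E} (hX : HasFDerivAt X X' p)
    (hY : HasFDerivAt Y Y' p) :
    HasFDerivAt (fun q ↦ ω (X q) (Y q))
      (o.areaForm'.flip (Y p) ∘L X' + o.areaForm' (X p) ∘L Y') p := by
  have hbilinear := o.areaForm'.hasFDerivAt_of_bilinear hX hY
  simp only [Orientation.areaForm'_apply, LinearMap.coe_toContinuousLinearMap'] at hbilinear
  refine hbilinear.congr_fderiv ?_
  ext v
  simp [add_comm]

theorem TracksAt.fderiv_areaForm_isBigO (htrack : TracksAt Y X p) (hY : ContDiffAt ℝ 1 Y p)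
    (hX : ∀ᶠ q in 𝓝 p, DifferentiableAt ℝ X q) :
    (fun q ↦ fderiv ℝ (fun x ↦ ω (X x) (Y x)) q (Y q)) =O[𝓝 p] fun q ↦ ω (X q) (Y q) := by
  obtain ⟨f, hf, hbracket⟩ := htrack
  have htrace : (fun q ↦ ω (fderiv ℝ Y q (X q)) (Y q) + ω (X q) (fderiv ℝ Y q (Y q))) =O[𝓝 p]
      fun q ↦ ω (X q) (Y q) := by
    have hle : (fun q ↦ ω (fderiv ℝ Y q (X q)) (Y q) + ω (X q) (fderiv ℝ Y q (Y q))) =O[𝓝 p]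
        fun q ↦ ‖fderiv ℝ Y q‖ * ω (X q) (Y q) :=
      IsBigO.of_bound 2 (.of_forall fun q ↦ by
        simpa [mul_assoc] using
          abs_areaForm_apply_add_areaForm_apply_le o (fderiv ℝ Y q) (X q) (Y q))
    simpa using hle.trans
      (((hY.continuousAt_fderiv one_ne_zero).tendsto.isBigO_one ℝ).norm_left.mul
        (isBigO_refl (fun q ↦ ω (X q) (Y q)) (𝓝 p)))
  have hcoeff : (fun q ↦ f q * ω (X q) (Y q)) =O[𝓝 p] fun q ↦ ω (X q) (Y q) := by
    simpa using hf.mul (isBigO_refl (fun q ↦ ω (X q) (Y q)) (𝓝 p))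
  refine (htrace.add hcoeff).congr' ?_ EventuallyEq.rfl
  filter_upwards [hbracket, hX, hY.eventually (by simp)] with q hq hXq hYq
  have hYq' := (hYq.differentiableAt one_ne_zero).hasFDerivAt
  rw [lieBracket, sub_eq_iff_eq_add] at hq
  rw [(hasFDerivAt_areaForm_apply o hXq.hasFDerivAt hYq').fderiv]
  simp only [add_apply, ContinuousLinearMap.comp_apply, ContinuousLinearMap.flip_apply,
    Orientation.areaForm'_apply, LinearMap.coe_toContinuousLinearMap', hq, map_add, map_smul,
    smul_eq_mul]
  ring

theorem IsLocalFlowAt.eventually_exists_eq_add_smul_rightAngleRotation {φ : E × ℝ → E}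
    (hφ : IsLocalFlowAt φ Y p) (hYp : Y p ≠ 0) {N : Set (E × ℝ)} (hN : N ∈ 𝓝 (p, 0))
    {T : Set ℝ} (hT : T ∈ 𝓝 0) :
    ∀ᶠ q in 𝓝 p, ∃ s t, (q, s) ∈ N ∧ t ∈ T ∧ φ (q, s) = p + t • J (Y p) := by
  have hcoord : Tendsto (fun z ↦ (‖Y p‖ ^ 2)⁻¹ * ω (Y p) (φ z - p)) (𝓝 (p, 0)) (𝓝 0) := by
    have hω : Continuous fun x ↦ (‖Y p‖ ^ 2)⁻¹ * o.areaForm' (Y p) (x - p) := by fun_prop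
    simpa [Function.comp_def] using (hω.tendsto p).comp hφ.tendsto
  filter_upwards [hφ.eventually_exists_inner_eq_zero hYp (inter_mem hN (hcoord hT))]
    with q ⟨s, ⟨hsN, hsT⟩, hs⟩
  refine ⟨s, _, hsN, hsT, ?_⟩
  have hdecomp := normSq_smul_eq_inner_smul_add_areaForm_smul o (Y p) (φ (q, s) - p)
  rw [hs, zero_smul, zero_add] at hdecomp
  rw [mul_smul, ← hdecomp, inv_smul_smul₀ (by simpa using hYp), add_sub_cancel]

end AreaForm

theorem isBigO_eventually_nhds {α F G : Type*} [TopologicalSpace α] [Norm F] [Norm G] {f : α → F}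
    {g : α → G} {x : α} (hfg : f =O[𝓝 x] g) : ∀ᶠ y in 𝓝 x, f =O[𝓝 y] g := by
  obtain ⟨C, hC⟩ := hfg.bound
  exact (eventually_eventually_nhds.2 hC).mono fun y hy ↦ .of_bound C hy

theorem exists_isEquivalent_sub_pow_smul {F : Type*} [NormedAddCommGroup F] [NormedSpace ℝ F]
    {c : ℝ → F} {t₀ : ℝ} (hc : AnalyticAt ℝ c t₀) (hne : ¬∀ᶠ t in 𝓝 t₀, c t = 0) :
    ∃ k : ℕ, ∃ z : F, z ≠ 0 ∧ c ~[𝓝 t₀] fun t ↦ (t - t₀) ^ k • z := by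
  obtain ⟨k, g, hg, hgt₀, hcg⟩ := hc.exists_eventuallyEq_pow_smul_nonzero_iff.2 hne
  refine ⟨k, g t₀, hgt₀, IsEquivalent.congr_left ?_ (EventuallyEq.symm hcg)⟩
  exact IsEquivalent.refl.smul ((isEquivalent_const_iff_tendsto hgt₀).2 hg.continuousAt)

section LocalStructure

variable {E : Type*} [NormedAddCommGroup E] [InnerProductSpace ℝ E] [Fact (finrank ℝ E = 2)]
  (o : Orientation ℝ E (Fin 2)) {X Y : E → E} {φ : E × ℝ → E} {p : E}

local notation "ω" => o.areaForm
local notation "J" => o.rightAngleRotation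

theorem IsLocalFlowAt.isLittleO_of_isLittleO_comp_line {F G : Type*} [NormedAddCommGroup F]
    [NormedAddCommGroup G] {g : E → F} {h : E → G} (hφ : IsLocalFlowAt φ Y p) (hYp : Y p ≠ 0)
    (hg : (fun z ↦ g (φ z) - g z.1) =o[𝓝 (p, 0)] fun z ↦ h z.1)
    (hh : (fun z ↦ h (φ z)) =O[𝓝 (p, 0)] fun z ↦ h z.1)
    (hline : (fun t : ℝ ↦ g (p + t • J (Y p))) =o[𝓝 0] fun t ↦ h (p + t • J (Y p))) :
    g =o[𝓝 p] h := by
  obtain ⟨C, hC, hCh⟩ := hh.exists_pos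
  rw [isLittleO_iff]
  intro κ hκ
  have hκ₂ : 0 < κ / 2 := half_pos hκ
  filter_upwards [hφ.eventually_exists_eq_add_smul_rightAngleRotation o hYp
    ((hg.bound hκ₂).and hCh.bound) (hline.bound (div_pos hκ₂ hC))]
    with q ⟨s, t, ⟨hgq, hhq⟩, ht, hst⟩
  simp only [hst] at hgq hhq ht
  calc ‖g q‖ ≤ ‖g (p + t • J (Y p)) - g q‖ + ‖g (p + t • J (Y p))‖ :=
        norm_sub_rev (g q) _ ▸ norm_le_norm_sub_add (g q) _
    _ ≤ κ / 2 * ‖h q‖ + κ / 2 / C * (C * ‖h q‖) := by gcongr; exact ht.trans (by gcongr)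
    _ = κ * ‖h q‖ := by field_simp; ring

theorem IsLocalFlowAt.not_eventually_eq_zero_on_line (hφ : IsLocalFlowAt φ Y p) (hYp : Y p ≠ 0)
    (hXφ : (fun z ↦ X (φ z)) ~[𝓝 (p, 0)] fun z ↦ X z.1) (hX : ¬∀ᶠ q in 𝓝 p, X q = 0) :
    ¬∀ᶠ t : ℝ in 𝓝 0, X (p + t • J (Y p)) = 0 := by
  refine fun hline ↦ hX ?_
  filter_upwards [hφ.eventually_exists_eq_add_smul_rightAngleRotation o hYp
    hXφ.isBigO_symm.eq_zero_imp hline] with q ⟨s, t, hq, ht, hst⟩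
  exact hq (by rw [hst]; exact ht)

theorem exists_ne_zero_isLittleO_areaForm (hX : AnalyticAt ℝ X p) (hφ : IsLocalFlowAt φ Y p)
    (hYp : Y p ≠ 0) (hXφ : (fun z ↦ X (φ z)) ~[𝓝 (p, 0)] fun z ↦ X z.1)
    (hX0 : ¬∀ᶠ q in 𝓝 p, X q = 0) :
    ∃ z ≠ 0, (fun q ↦ ω z (X q)) =o[𝓝 p] X := by
  have hγ : AnalyticAt ℝ (fun t : ℝ ↦ p + t • J (Y p)) 0 := by fun_prop
  obtain ⟨k, z, hz, hequiv⟩ := exists_isEquivalent_sub_pow_smul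
    (AnalyticAt.fun_comp (by simpa using hX) hγ)
    (hφ.not_eventually_eq_zero_on_line o hYp hXφ hX0)
  refine ⟨z, hz, hφ.isLittleO_of_isLittleO_comp_line o hYp ?_ hXφ.isBigO ?_⟩
  · simpa using (isBigO_areaForm_right o z).trans_isLittleO hXφ.isLittleO
  · simpa using ((isBigO_areaForm_right o z).trans_isLittleO hequiv.isLittleO).trans_isBigO
      hequiv.isBigO_symm

theorem isBigO_areaForm_or_isLittleO {α : Type*} {l : Filter α} {X Y : α → E} {y z : E}
    (hY : Tendsto Y l (𝓝 y)) (hz : z ≠ 0) (hX : (fun q ↦ ω z (X q)) =o[l] X) :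
    (X =O[l] fun q ↦ ω (X q) (Y q)) ∨ (fun q ↦ ω (X q) (Y q)) =o[l] X := by
  have hω : Tendsto (fun q ↦ ω z y - ω z (Y q)) l (𝓝 0) := by
    simpa using (tendsto_const_nhds (x := ω z y)).sub
      (tendsto_areaForm o (tendsto_const_nhds (x := z)) hY)
  have hmain : (fun q ↦ ω z y • X q - ω (X q) (Y q) • z) =o[l] X := by
    have hsum : (fun q ↦ (ω z y - ω z (Y q)) • X q + ω z (X q) • Y q) =o[l] X := by
      refine .add ?_ ?_
      · simpa using ((isLittleO_one_iff ℝ).2 hω).smul_isBigO (isBigO_refl X l)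
      · simpa using hX.norm_right.smul_isBigO (hY.isBigO_one ℝ)
    refine hsum.congr_left fun q ↦ ?_
    have hcramer := areaForm_smul_add_areaForm_smul_add_areaForm_smul_eq_zero o z (Y q) (X q)
    rw [o.areaForm_swap (Y q), o.areaForm_swap (X q) z] at hcramer
    linear_combination (norm := module) -hcramer
  rcases eq_or_ne (ω z y) 0 with hzy | hzy
  · right
    simp only [hzy, zero_smul, zero_sub, isLittleO_neg_left] at hmain
    refine IsBigO.trans_isLittleO (.of_bound ‖z‖⁻¹ (.of_forall fun q ↦ ?_)) hmain
    rw [norm_smul, mul_comm ‖_‖ ‖z‖, inv_mul_cancel_left₀ (norm_ne_zero_iff.2 hz)]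
  · left
    have hXz : X =O[l] fun q ↦ ω (X q) (Y q) • z := by
      simpa [isBigO_const_smul_left hzy] using
        ((isLittleO_const_smul_right hzy).2 hmain).right_isBigO_sub
    exact hXz.trans (.of_bound ‖z‖ (.of_forall fun q ↦ by rw [norm_smul, mul_comm]))

theorem eventually_eq_zero_of_eq_smul {α : Type*} {l : Filter α} {f g Y : α → E}
    (hf : f =O[l] fun q ↦ ω (f q) (Y q)) (hg : (fun q ↦ ω (g q) (Y q)) =o[l] g) :
    ∀ᶠ q in l, ∀ d : ℝ, f q = d • g q → f q = 0 := by
  obtain ⟨C, hC, hfC⟩ := hf.exists_pos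
  filter_upwards [hfC.bound, hg.bound (show 0 < (2 * C)⁻¹ by positivity)] with q hfq hgq d hd
  have hhalf : ‖f q‖ ≤ 1 / 2 * ‖f q‖ := calc
    ‖f q‖ ≤ C * (|d| * ‖ω (g q) (Y q)‖) := by
      simpa [hd, norm_smul] using hfq
    _ ≤ C * (|d| * ((2 * C)⁻¹ * ‖g q‖)) := by gcongr
    _ = 1 / 2 * ‖f q‖ := by rw [hd, norm_smul, Real.norm_eq_abs]; field_simp
  exact norm_le_zero_iff.1 (by linarith)

theorem eventually_isLittleO_areaForm_of_eq_zero (hX : AnalyticAt ℝ X p) (hφ : IsLocalFlowAt φ Y p)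
    (hYp : Y p ≠ 0) (hXφ : (fun z ↦ X (φ z)) ~[𝓝 (p, 0)] fun z ↦ X z.1)
    (huφ : (fun z ↦ ω (X (φ z)) (Y (φ z))) ~[𝓝 (p, 0)] fun z ↦ ω (X z.1) (Y z.1))
    (hX0 : ¬∀ᶠ q in 𝓝 p, X q = 0) (huX : (fun q ↦ ω (X q) (Y q)) =o[𝓝 p] X) :
    ∀ᶠ q in 𝓝 p, X q = 0 → (fun x ↦ ω (X x) (Y x)) =o[𝓝 q] X := by
  have hγ : AnalyticAt ℝ (fun t : ℝ ↦ X (p + t • J (Y p))) 0 :=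
    AnalyticAt.fun_comp (by simpa using hX) (by fun_prop)
  have hisolated : ∀ᶠ t : ℝ in 𝓝 0, X (p + t • J (Y p)) = 0 → t = 0 := by
    have hpunctured := hγ.eventually_eq_zero_or_eventually_ne_zero.resolve_left
      (hφ.not_eventually_eq_zero_on_line o hYp hXφ hX0)
    filter_upwards [eventually_nhdsWithin_iff.1 hpunctured] with t ht hXt
    by_contra ht0
    exact ht ht0 hXt
  filter_upwards [hφ.eventually_exists_eq_add_smul_rightAngleRotation o hYp
    (((hφ.and hXφ.isBigO.eq_zero_imp).and (isBigO_eventually_nhds hXφ.isBigO)).and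
      (isBigO_eventually_nhds huφ.isBigO_symm)) hisolated]
    with q ⟨s, t, ⟨⟨⟨hflow, hzero⟩, hXO⟩, huO⟩, ht, hst⟩ hXq
  have hqp : φ (q, s) = p := by
    rw [hst, ht (by rw [← hst]; exact hzero hXq), zero_smul, add_zero]
  have hslice : Tendsto (fun x ↦ (x, s)) (𝓝 q) (𝓝 (q, s)) :=
    (Continuous.prodMk_left s).tendsto q
  have hφs : Tendsto (fun x ↦ φ (x, s)) (𝓝 q) (𝓝 p) := by
    simpa only [hqp, Function.comp_def] using hflow.1.tendsto.comp hslice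
  exact ((huO.comp_tendsto hslice).trans_isLittleO (huX.comp_tendsto hφs)).trans_isBigO
    (hXO.comp_tendsto hslice)

theorem TracksAt.isBigO_areaForm_or_eventually_isLittleO (htrack : TracksAt Y X p)
    (hX : AnalyticAt ℝ X p) (hY : ContDiffAt ℝ 1 Y p) (hYp : Y p ≠ 0)
    (hX0 : ¬∀ᶠ q in 𝓝 p, X q = 0) :
    (X =O[𝓝 p] fun q ↦ ω (X q) (Y q)) ∨ (fun q ↦ ω (X q) (Y q)) =o[𝓝 p] X ∧
      ∀ᶠ q in 𝓝 p, X q = 0 → (fun x ↦ ω (X x) (Y x)) =o[𝓝 q] X := by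
  have : FiniteDimensional ℝ E := .of_fact_finrank_eq_two
  have : CompleteSpace E := FiniteDimensional.complete ℝ E
  obtain ⟨φ, hφ⟩ := exists_isLocalFlowAt hY
  have hXdiff := hX.eventually_analyticAt.mono fun q hq ↦ hq.differentiableAt
  have hudiff : ∀ᶠ q in 𝓝 p, DifferentiableAt ℝ (fun x ↦ ω (X x) (Y x)) q := by
    filter_upwards [hXdiff, hY.eventually (by simp)] with q hXq hYq
    exact (hasFDerivAt_areaForm_apply o hXq.hasFDerivAt
      (hYq.differentiableAt one_ne_zero).hasFDerivAt).differentiableAt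
  have hXφ := hφ.comp_isEquivalent hXdiff (htrack.fderiv_isBigO hY)
  have huφ := hφ.comp_isEquivalent hudiff (htrack.fderiv_areaForm_isBigO o hY hXdiff)
  obtain ⟨z, hz, hzX⟩ := exists_ne_zero_isLittleO_areaForm o hX hφ hYp hXφ hX0
  exact (isBigO_areaForm_or_isLittleO o hY.continuousAt hz hzX).imp_right fun huX ↦
    ⟨huX, eventually_isLittleO_areaForm_of_eq_zero o hX hφ hYp hXφ huφ hX0 huX⟩

end LocalStructure

section Perturbation

variable {α E : Type*} [TopologicalSpace α] [NormedAddCommGroup E] [InnerProductSpace ℝ E]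
  [Fact (finrank ℝ E = 2)] (o : Orientation ℝ E (Fin 2)) {X Y V : α → E} {p : α}

local notation "ω" => o.areaForm
local notation "J" => o.rightAngleRotation

theorem eventually_add_smul_ne_zero_of_isBigO (hX : X =O[𝓝 p] fun q ↦ ω (X q) (Y q))
    (hY : ContinuousAt Y p) (hV : ContinuousAt V p) (hVp : V p ≠ 0) (hVY : ω (V p) (Y p) = 0) :
    ∀ᶠ q in 𝓝 p, ∀ d : ℝ, d ≠ 0 → X q + d • V q ≠ 0 := by
  have hVo : (fun q ↦ ω (V q) (Y q)) =o[𝓝 p] V :=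
    ((isLittleO_const_iff hVp).2 (hVY ▸ tendsto_areaForm o hV hY)).trans_isBigO
      ((isEquivalent_const_iff_tendsto hVp).2 hV).isBigO_symm
  filter_upwards [eventually_eq_zero_of_eq_smul o hX hVo, hV.eventually_ne hVp]
    with q hq hVq d hd hXV
  have hXq : X q = -d • V q := by rw [neg_smul]; exact eq_neg_of_add_eq_zero_left hXV
  rw [hq _ hXq, zero_add] at hXV
  exact smul_ne_zero hd hVq hXV

theorem eventually_add_smul_ne_zero_of_isLittleO (hX : (fun q ↦ ω (X q) (Y q)) =o[𝓝 p] X)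
    (hY : ContinuousAt Y p) (hV : ContinuousAt V p) (hVY : ω (V p) (Y p) ≠ 0) :
    ∀ᶠ q in 𝓝 p, ∀ d : ℝ, d ≠ 0 → X q + d • V q ≠ 0 := by
  have hlim := tendsto_areaForm o hV hY
  have hVO : V =O[𝓝 p] fun q ↦ ω (V q) (Y q) :=
    (isBigO_const_of_tendsto hV hVY).trans
      ((isEquivalent_const_iff_tendsto hVY).2 hlim).isBigO_symm
  filter_upwards [eventually_eq_zero_of_eq_smul o hVO hX, hlim.eventually_ne hVY]
    with q hq hVq d hd hXV
  have hVX : V q = -d⁻¹ • X q := by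
    rw [eq_neg_of_add_eq_zero_left hXV, neg_smul_neg, inv_smul_smul₀ hd]
  exact hVq (by simp [hq _ hVX])

theorem isClosed_setOf_and {K : Set α} {P : α → Prop} (hK : IsClosed K)
    (hP : ∀ p ∈ K, ¬P p → ∀ᶠ q in 𝓝 p, q ∈ K → ¬P q) : IsClosed {p | p ∈ K ∧ P p} := by
  refine isClosed_of_closure_subset fun p hp ↦ ?_
  have hpK : p ∈ K := hK.closure_subset_iff.2 (fun q hq ↦ hq.1) hp
  refine ⟨hpK, by_contra fun hPp ↦ ?_⟩
  obtain ⟨q, ⟨hqK, hPq⟩, hq⟩ :=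
    ((mem_closure_iff_frequently.1 hp).and_eventually (hP p hpK hPp)).exists
  exact hq hqK hPq

theorem exists_continuous_eq_one_and_eq_zero [NormalSpace α] {K : Set α} {P : α → Prop}
    (hK : IsClosed K) (hP : ∀ p ∈ K, P p → ∀ᶠ q in 𝓝 p, q ∈ K → P q)
    (hnP : ∀ p ∈ K, ¬P p → ∀ᶠ q in 𝓝 p, q ∈ K → ¬P q) :
    ∃ χ : C(α, ℝ), ∀ p ∈ K, (P p → χ p = 1) ∧ (¬P p → χ p = 0) := by
  have hclosed := isClosed_setOf_and hK hnP
  have hclosed' := isClosed_setOf_and (P := fun p ↦ ¬P p) hK (by simpa using hP)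
  obtain ⟨χ, hχ0, hχ1, -⟩ := exists_continuous_zero_one_of_isClosed hclosed' hclosed
    (disjoint_left.2 fun p hp hp' ↦ hp.2 hp'.2)
  exact ⟨χ, fun p hp ↦ ⟨fun h ↦ hχ1 ⟨hp, h⟩, fun h ↦ hχ0 ⟨hp, h⟩⟩⟩

theorem exists_continuousOn_eventually_add_smul_ne_zero [NormalSpace α] {K S : Set α}
    (hK : IsClosed K) (hYS : ContinuousOn Y S) (hY : ∀ p ∈ K, ContinuousAt Y p)
    (hY0 : ∀ p ∈ K, Y p ≠ 0) (hX0 : ∀ p ∈ K, ¬∀ᶠ q in 𝓝 p, X q = 0)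
    (hXY : ∀ p ∈ K, (X =O[𝓝 p] fun q ↦ ω (X q) (Y q)) ∨ (fun q ↦ ω (X q) (Y q)) =o[𝓝 p] X ∧
      ∀ᶠ q in 𝓝 p, q ∈ K → (fun x ↦ ω (X x) (Y x)) =o[𝓝 q] X) :
    ∃ V : α → E, ContinuousOn V S ∧
      ∀ p ∈ K, ∀ᶠ q in 𝓝 p, ∀ d : ℝ, d ≠ 0 → X q + d • V q ≠ 0 := by
  have hexcl : ∀ p ∈ K, (X =O[𝓝 p] fun q ↦ ω (X q) (Y q)) →
      ¬(fun q ↦ ω (X q) (Y q)) =o[𝓝 p] X := fun p hp hXu huX ↦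
    isLittleO_irrefl (not_eventually.1 (hX0 p hp)) (hXu.trans_isLittleO huX)
  obtain ⟨χ, hχ⟩ := exists_continuous_eq_one_and_eq_zero
    (P := fun p ↦ (fun q ↦ ω (X q) (Y q)) =o[𝓝 p] X) hK
    (fun p hp huX ↦ ((hXY p hp).resolve_left fun hXu ↦ hexcl p hp hXu huX).2)
    (fun p hp huX ↦ (isBigO_eventually_nhds ((hXY p hp).resolve_right fun h ↦ huX h.1)).mono
      fun q hXu hq ↦ hexcl q hq hXu)
  have hJ : Continuous J := o.rightAngleRotation.continuous
  refine ⟨fun q ↦ (1 - χ q) • Y q + χ q • J (Y q), by fun_prop, fun p hp ↦ ?_⟩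
  have hYp := hY p hp
  have hV : ContinuousAt (fun q ↦ (1 - χ q) • Y q + χ q • J (Y q)) p := by fun_prop
  by_cases huX : (fun q ↦ ω (X q) (Y q)) =o[𝓝 p] X
  · refine eventually_add_smul_ne_zero_of_isLittleO o huX hYp hV ?_
    simp [(hχ p hp).1 huX, hY0 p hp]
  · refine eventually_add_smul_ne_zero_of_isBigO o ((hXY p hp).resolve_right fun h ↦ huX h.1)
      hYp hV ?_ ?_ <;> simp [(hχ p hp).2 huX, hY0 p hp]

end Perturbation

section Essential

variable {α F : Type*} [TopologicalSpace α] [NormedAddCommGroup F]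

/-- Every continuous `X'` uniformly close enough to `X` on `S` has a zero in `S`. For the closure of
a connected isolating neighborhood, this encodes the nonvanishing of the Poincaré–Hopf index. -/
def HasEssentialZerosOn (X : α → F) (S : Set α) : Prop :=
  ∃ ε > 0, ∀ X' : α → F, ContinuousOn X' S → (∀ p ∈ S, ‖X' p - X p‖ < ε) → ∃ p ∈ S, X' p = 0

variable [NormedSpace ℝ F] {X V : α → F} {S : Set α}

theorem not_hasEssentialZerosOn_of_eventually_add_smul_ne_zero (hS : IsCompact S)
    (hX : ContinuousOn X S) (hV : ContinuousOn V S)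
    (hXV : ∀ p ∈ S, X p = 0 → ∀ᶠ q in 𝓝 p, ∀ d : ℝ, d ≠ 0 → X q + d • V q ≠ 0) :
    ¬HasEssentialZerosOn X S := by
  rintro ⟨ε, hε, hess⟩
  have hlocal : ∀ p ∈ S, ∀ᶠ z : ℝ × α in 𝓝 0 ×ˢ 𝓝[S] p,
      ‖z.1 • V z.2‖ < ε ∧ (z.1 ≠ 0 → X z.2 + z.1 • V z.2 ≠ 0) := by
    intro p hp
    have hdV : Tendsto (fun z : ℝ × α ↦ z.1 • V z.2) (𝓝 0 ×ˢ 𝓝[S] p) (𝓝 0) := by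
      simpa using (tendsto_fst (f := 𝓝 (0 : ℝ))).smul ((hV p hp).tendsto.comp tendsto_snd)
    have hXdV : Tendsto (fun z : ℝ × α ↦ X z.2 + z.1 • V z.2) (𝓝 0 ×ˢ 𝓝[S] p) (𝓝 (X p)) := by
      simpa using ((hX p hp).tendsto.comp tendsto_snd).add hdV
    refine (hdV.norm.eventually_lt_const (by simpa using hε)).and ?_
    by_cases hXp : X p = 0
    · exact (tendsto_snd.eventually ((hXV p hp hXp).filter_mono nhdsWithin_le_nhds)).mono
        fun z hz ↦ hz z.1
    · exact (hXdV.eventually_ne hXp).mono fun z hz _ ↦ hz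
  have hglobal : ∀ᶠ d : ℝ in 𝓝 0, ∀ p ∈ S, p ∈ S →
      ‖d • V p‖ < ε ∧ (d ≠ 0 → X p + d • V p ≠ 0) := by
    refine hS.eventually_forall_of_forall_eventually fun p hp ↦ ?_
    have h := hlocal p hp
    rw [← nhdsWithin_univ, ← nhdsWithin_prod_eq, eventually_nhdsWithin_iff] at h
    exact h.mono fun z hz hzS ↦ hz ⟨mem_univ _, hzS⟩
  obtain ⟨d, hd, hd0 : d ≠ 0⟩ :=
    ((hglobal.filter_mono nhdsWithin_le_nhds).and (self_mem_nhdsWithin (s := {0}ᶜ))).exists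
  obtain ⟨p, hp, hzero⟩ := hess (fun q ↦ X q + d • V q) (hX.add (hV.const_smul d))
    fun q hq ↦ by simpa using (hd q hq hq).1
  exact (hd p hp hp).2 hd0 hzero

end Essential

theorem not_eventually_eq_zero_of_isCompact_closure {E F : Type*} [NormedAddCommGroup E]
    [NormedSpace ℝ E] [Nontrivial E] [NormedAddCommGroup F] [NormedSpace ℝ F] {X : E → F}
    {U : Set E} {p : E} (hU : IsOpen U) (hUc : IsCompact (closure U)) (hX : AnalyticOnNhd ℝ X U)
    (hXc : ContinuousOn X (closure U)) (hzeros : {q ∈ closure U | X q = 0} ⊆ U) (hp : p ∈ U) :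
    ¬∀ᶠ q in 𝓝 p, X q = 0 := by
  intro hp0
  have hCU : connectedComponentIn U p ⊆ U := connectedComponentIn_subset U p
  have hzero : EqOn X 0 (connectedComponentIn U p) :=
    (hX.mono hCU).eqOn_zero_of_preconnected_of_eventuallyEq_zero
      isPreconnected_connectedComponentIn (mem_connectedComponentIn hp) hp0
  have hzero' : EqOn X 0 (closure (connectedComponentIn U p)) :=
    hzero.of_subset_closure (hXc.mono (closure_mono hCU)) continuousOn_const subset_closure
      Subset.rfl
  have hclosureU : closure (connectedComponentIn U p) ⊆ U := fun q hq ↦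
    hzeros ⟨closure_mono hCU hq, hzero' hq⟩
  have hclosed : IsClosed (connectedComponentIn U p) := closure_subset_iff_isClosed.1
    (isPreconnected_connectedComponentIn.closure.subset_connectedComponentIn
      (subset_closure (mem_connectedComponentIn hp)) hclosureU)
  have huniv : connectedComponentIn U p = univ :=
    IsClopen.eq_univ ⟨hclosed, hU.connectedComponentIn⟩ ⟨p, mem_connectedComponentIn hp⟩
  exact noncompact_univ E (huniv ▸ hUc.of_isClosed_subset hclosed (hCU.trans subset_closure))

theorem zero_of_tracking_essential_block_real_general {E : Type*} [NormedAddCommGroup E]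
    [InnerProductSpace ℝ E] [Fact (finrank ℝ E = 2)] {X Y : E → E} {U : Set E} (hU : IsOpen U)
    (hUc : IsCompact (closure U)) (hX : AnalyticOnNhd ℝ X U) (hXc : ContinuousOn X (closure U))
    (hY : ContDiffOn ℝ 1 Y U) (hYc : ContinuousOn Y (closure U))
    (htrack : ∀ p ∈ U, TracksAt Y X p) (hzeros : {p ∈ closure U | X p = 0} ⊆ U)
    (hess : HasEssentialZerosOn X (closure U)) :
    ∃ p ∈ {p ∈ closure U | X p = 0}, Y p = 0 := by
  by_contra! hY0
  have : FiniteDimensional ℝ E := .of_fact_finrank_eq_two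
  have : Nontrivial E := nontrivial_of_finrank_eq_succ (R := ℝ) (n := 1) Fact.out
  let o : Orientation ℝ E (Fin 2) := (finBasisOfFinrankEq ℝ E Fact.out).orientation
  have hYdiff : ∀ p ∈ U, ContDiffAt ℝ 1 Y p := fun p hp ↦ (hY p hp).contDiffAt (hU.mem_nhds hp)
  have hX0 : ∀ p ∈ U, ¬∀ᶠ q in 𝓝 p, X q = 0 := fun p ↦
    not_eventually_eq_zero_of_isCompact_closure hU hUc hX hXc hzeros
  have hdich := fun p (hp : p ∈ {p ∈ closure U | X p = 0}) ↦
    (htrack p (hzeros hp)).isBigO_areaForm_or_eventually_isLittleO o (hX p (hzeros hp))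
      (hYdiff p (hzeros hp)) (hY0 p hp) (hX0 p (hzeros hp))
  obtain ⟨V, hV, hXV⟩ := exists_continuousOn_eventually_add_smul_ne_zero o
    (hXc.preimage_isClosed_of_isClosed isClosed_closure isClosed_singleton) hYc
    (fun p hp ↦ (hYdiff p (hzeros hp)).continuousAt) hY0 (fun p hp ↦ hX0 p (hzeros hp))
    (fun p hp ↦ (hdich p hp).imp_right fun h ↦ ⟨h.1, h.2.mono fun q hq hqK ↦ hq hqK.2⟩)
  exact not_hasEssentialZerosOn_of_eventually_add_smul_ne_zero hUc hXc hV
    (fun p hp hXp ↦ hXV p ⟨hp, hXp⟩) hess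

/-- **Hirsch, Theorem 1.2 (real case, local form).**
If `Y` tracks `X` (both real-analytic on an open set `Ω ⊆ ℝ²`) and `K` is an essential
`X`-block with connected isolating neighborhood `U`, then `Y` vanishes somewhere on `K`. -/
theorem zero_of_tracking_essential_block_real
    (Ω : Set (EuclideanSpace ℝ (Fin 2))) (hΩ : IsOpen Ω)
    (X Y : EuclideanSpace ℝ (Fin 2) → EuclideanSpace ℝ (Fin 2))
    (hX : AnalyticOnNhd ℝ X Ω) (hY : AnalyticOnNhd ℝ Y Ω)
    (f : EuclideanSpace ℝ (Fin 2) → ℝ) (hf : ContinuousOn f Ω)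
    (htrack : ∀ p ∈ Ω, fderiv ℝ X p (Y p) - fderiv ℝ Y p (X p) = f p • X p)
    (U : Set (EuclideanSpace ℝ (Fin 2))) (hUopen : IsOpen U) (hUconn : IsConnected U)
    (hUcomp : IsCompact (closure U)) (hUΩ : closure U ⊆ Ω)
    (K : Set (EuclideanSpace ℝ (Fin 2)))
    (hK : K = {p ∈ closure U | X p = 0}) (hKU : K ⊆ U)
    (hess : ∃ ε > 0, ∀ X' : EuclideanSpace ℝ (Fin 2) → EuclideanSpace ℝ (Fin 2),
      ContinuousOn X' (closure U) → (∀ p ∈ closure U, ‖X' p - X p‖ < ε) →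
      ∃ p ∈ closure U, X' p = 0) :
    ∃ p ∈ K, Y p = 0 := by
  subst hK
  have : Fact (finrank ℝ (EuclideanSpace ℝ (Fin 2)) = 2) := ⟨finrank_euclideanSpace_fin⟩
  have hUΩ' : U ⊆ Ω := subset_closure.trans hUΩ
  exact zero_of_tracking_essential_block_real_general hUopen hUcomp (hX.mono hUΩ')
    (hX.continuousOn.mono hUΩ) ((hY.mono hUΩ').contDiffOn hUopen.uniqueDiffOn)
    (hY.continuousOn.mono hUΩ) (fun p hp ↦ .of_continuousOn hΩ hf htrack (hUΩ' hp)) hKU hess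
end

section
/- Let Ω ⊆ ℂ² be open and let X, Y : Ω → ℂ² be holomorphic (complex-analytic) vector fields. Assume Y tracks X over ℂ: there is a continuous function f : Ω → ℂ such that DX(p)(Y(p)) − DY(p)(X(p)) = f(p) • X(p) for all p ∈ Ω, where DX, DY denote the complex derivatives. Let U ⊆ Ω be a connected open set whose closure cl U is compact and contained in Ω, let K := {p ∈ cl U : X(p) = 0}, and assume K ⊆ U. Assume moreover that K is essential: there exists ε > 0 such that every continuous map X' : cl U → ℂ² with ‖X'(p) − X(p)‖ < ε for all p ∈ cl U has a zero in cl U. Then there exists p ∈ K with Y(p) = 0. -/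
open Set

/-!
Tracking gives `(X ∘ γ)' = DY(X ∘ γ) + [Y, X] ∘ γ = O(X ∘ γ)` along an integral curve `γ` of `Y`, so
by Grönwall's inequality the real flow of `Y` preserves the zero set of `X`. Let `p` be a point of
largest norm in `K`. Then `‖γ‖ ^ 2` has a local maximum at `p` along the integral curve of `Y`
through `p`, and the second derivative test reads `‖Y p‖ ^ 2 + re ⟪p, DY(p) (Y p)⟫ ≤ 0`. The field
`i Y` tracks `X` as well, and for it the inner product has the opposite sign. Adding the two
inequalities gives `Y p = 0`. An essential block is nonempty because `X` is one of its own
perturbations.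
-/

open Filter Topology Metric Asymptotics VectorField

section Holomorphic

variable {E F : Type*} [NormedAddCommGroup E] [NormedSpace ℂ E]
  [NormedAddCommGroup F] [NormedSpace ℂ F] {f : E → F} {p : E}

theorem exists_lipschitzOnWith_nhds_of_eventually_differentiableAt
    (hf : ∀ᶠ q in 𝓝 p, DifferentiableAt ℂ f q) : ∃ K, ∃ s ∈ 𝓝 p, LipschitzOnWith K f s := by
  have hclose : ∀ᶠ q in 𝓝 p, dist (f q) (f p) < 1 :=
    hf.self_of_nhds.continuousAt.eventually (ball_mem_nhds _ one_pos)
  obtain ⟨R, hR, hball⟩ := eventually_nhds_iff_ball.1 (hf.and hclose)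
  have hr : 0 < R / 3 := by positivity
  refine ⟨⟨2 / (2 * (R / 3)), by positivity⟩, ball p (R / 3), ball_mem_nhds p hr,
    LipschitzOnWith.of_dist_le_mul fun x hx y hy => ?_⟩
  have hsub : ball y (2 * (R / 3)) ⊆ ball p R :=
    ball_subset_ball' (by linarith [mem_ball.1 hy])
  refine Complex.dist_le_div_mul_dist_of_mapsTo_ball
    (fun z hz => (hball z (hsub hz)).1.differentiableWithinAt) (fun z hz => ?_) ?_
  · have hy' := (hball y (hsub (mem_ball_self (by positivity)))).2
    have hz' := (hball z (hsub hz)).2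
    exact mem_closedBall.2 (by linarith [dist_triangle_right (f z) (f y) (f p)])
  · exact mem_ball.2 (by linarith [mem_ball.1 hx, mem_ball.1 hy, dist_triangle_right x y p])

theorem continuousAt_fderiv_of_eventually_differentiableAt
    (hf : ∀ᶠ q in 𝓝 p, DifferentiableAt ℂ f q) : ContinuousAt (fderiv ℂ f) p := by
  obtain ⟨K, s, hs, hlip⟩ := exists_lipschitzOnWith_nhds_of_eventually_differentiableAt hf
  obtain ⟨R, hR, hball⟩ := eventually_nhds_iff_ball.1 (hf.and hs)
  have hr : 0 < R / 2 := by positivity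
  refine continuousAt_of_locally_lipschitz hr (2 * K / (R / 2)) fun q hq => ?_
  -- Schwarz's lemma applied to the increment of `f` along the translation by `q - p`
  set g : E → F := fun x => f (x + (q - p)) - f x
  have hshift : ∀ x ∈ ball p (R / 2), x + (q - p) ∈ ball p R := fun x hx => by
    rw [mem_ball, dist_eq_norm] at hx ⊢
    rw [dist_eq_norm] at hq
    calc ‖x + (q - p) - p‖ = ‖(x - p) + (q - p)‖ := by congr 1; abel
      _ < R := by linarith [norm_add_le (x - p) (q - p)]
  have hmem : ∀ x ∈ ball p (R / 2), x ∈ ball p R := fun x hx =>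
    ball_subset_ball (by linarith) hx
  have hg : ∀ x ∈ ball p (R / 2),
      HasFDerivAt g (fderiv ℂ f (x + (q - p)) - fderiv ℂ f x) x := fun x hx =>
    ((hasFDerivAt_comp_add_right _).2 (hball _ (hshift x hx)).1.hasFDerivAt).sub
      (hball _ (hmem x hx)).1.hasFDerivAt
  have hg_le : ∀ x ∈ ball p (R / 2), ‖g x‖ ≤ K * dist q p := fun x hx => by
    simpa [g, dist_eq_norm] using
      hlip.dist_le_mul _ (hball _ (hshift x hx)).2 _ (hball _ (hmem x hx)).2
  have hp : p ∈ ball p (R / 2) := mem_ball_self hr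
  have hmaps : MapsTo g (ball p (R / 2)) (closedBall (g p) (2 * K * dist q p)) := fun x hx => by
    rw [mem_closedBall, dist_eq_norm]
    linarith [norm_sub_le (g x) (g p), hg_le x hx, hg_le p hp]
  calc dist (fderiv ℂ f q) (fderiv ℂ f p) = ‖fderiv ℂ g p‖ := by
        rw [(hg p hp).fderiv, add_sub_cancel, dist_eq_norm]
    _ ≤ 2 * K * dist q p / (R / 2) := Complex.norm_fderiv_le_div_of_mapsTo_ball
        (fun x hx => (hg x hx).differentiableAt.differentiableWithinAt) hmaps hr
    _ = 2 * K / (R / 2) * dist q p := by ring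

theorem contDiffAt_one_of_eventually_differentiableAt
    (hf : ∀ᶠ q in 𝓝 p, DifferentiableAt ℂ f q) : ContDiffAt ℂ 1 f p :=
  contDiffAt_one_iff.2 ⟨fderiv ℂ f, {q | ∀ᶠ x in 𝓝 q, DifferentiableAt ℂ f x},
    eventually_eventually_nhds.2 hf,
    fun _ hq => (continuousAt_fderiv_of_eventually_differentiableAt hq).continuousWithinAt,
    fun _ hq => hq.self_of_nhds.hasFDerivAt⟩

end Holomorphic

section IntegralCurve

variable {E : Type*} [NormedAddCommGroup E] [NormedSpace ℝ E]

theorem eventuallyEq_zero_of_hasDerivAt_of_isBigO {g g' : ℝ → E} {t₀ : ℝ}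
    (hg : ∀ᶠ t in 𝓝 t₀, HasDerivAt g (g' t) t) (hg' : g' =O[𝓝 t₀] g) (h₀ : g t₀ = 0) :
    g =ᶠ[𝓝 t₀] 0 := by
  obtain ⟨K, hK, hbound⟩ := hg'.exists_nonneg
  -- `g` and `0` both solve `x' = v t x`; where `g t = 0`, the junk value `v t x = 0` equals `g' t`
  let v : ℝ → E → E := fun t x => (‖x‖ / ‖g t‖) • g' t
  refine ODE_solution_unique_of_eventually (v := v) (K := ⟨K, hK⟩) (s := fun _ => univ) ?_ ?_ ?_ h₀
  · filter_upwards [hbound.bound] with t ht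
    refine LipschitzOnWith.of_dist_le_mul fun x _ y _ => ?_
    calc dist (v t x) (v t y) = ‖g' t‖ / ‖g t‖ * |‖x‖ - ‖y‖| := by
          rw [dist_eq_norm, ← sub_smul, norm_smul, ← sub_div, norm_div, Real.norm_eq_abs, norm_norm]
          ring
      _ ≤ K * dist x y := by
          rw [dist_eq_norm]
          gcongr
          · exact div_le_of_le_mul₀ (norm_nonneg _) hK ht
          · exact abs_norm_sub_norm_le x y
  · filter_upwards [hg, hbound.bound] with t hgt ht
    refine ⟨?_, mem_univ _⟩
    rcases eq_or_ne (g t) 0 with hzero | hne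
    · have : g' t = 0 := by simpa [hzero] using ht
      simpa [v, this] using hgt
    · simpa [v, hne] using hgt
  · exact Eventually.of_forall fun t => ⟨by simp [v], mem_univ _⟩

variable {X Y : E → E}

theorem eventually_eq_zero_of_isIntegralCurveAt_of_lieBracket_isBigO {γ : ℝ → E} {t₀ : ℝ}
    (hγ : IsIntegralCurveAt γ (fun _ => Y) t₀)
    (hX : ∀ᶠ q in 𝓝 (γ t₀), DifferentiableAt ℝ X q) (hY : ContDiffAt ℝ 1 Y (γ t₀))
    (hXY : lieBracket ℝ Y X =O[𝓝 (γ t₀)] X) (h₀ : X (γ t₀) = 0) :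
    ∀ᶠ t in 𝓝 t₀, X (γ t) = 0 := by
  have hDY : (fun q => fderiv ℝ Y q (X q)) =O[𝓝 (γ t₀)] X := by
    have hbounded : (fderiv ℝ Y) =O[𝓝 (γ t₀)] (fun _ => (1 : ℝ)) :=
      (hY.continuousAt_fderiv one_ne_zero).isBigO_one ℝ
    refine IsBigO.trans (.of_norm_le fun q => (fderiv ℝ Y q).le_opNorm (X q)) ?_
    simpa using hbounded.norm_left.mul (isBigO_refl X _).norm_norm
  have hDX : (fun q => fderiv ℝ X q (Y q)) =O[𝓝 (γ t₀)] X := by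
    simpa [lieBracket_eq] using hXY.add hDY
  have hcont : Tendsto γ (𝓝 t₀) (𝓝 (γ t₀)) := hγ.continuousAt
  refine eventuallyEq_zero_of_hasDerivAt_of_isBigO ?_ (hDX.comp_tendsto hcont) h₀
  filter_upwards [hγ, hcont.eventually hX] with t hγt hXt
  exact hXt.hasFDerivAt.comp_hasDerivAt t hγt

theorem exists_isIntegralCurveAt_eventually_eq_zero_of_lieBracket_isBigO [CompleteSpace E] {p : E}
    (hX : ∀ᶠ q in 𝓝 p, DifferentiableAt ℝ X q) (hY : ContDiffAt ℝ 1 Y p)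
    (hXY : lieBracket ℝ Y X =O[𝓝 p] X) (hp : X p = 0) :
    ∃ γ : ℝ → E, γ 0 = p ∧ IsIntegralCurveAt γ (fun _ => Y) 0 ∧ ∀ᶠ t in 𝓝 0, X (γ t) = 0 := by
  obtain ⟨γ, rfl, ε, hε, hderiv⟩ :=
    hY.exists_forall_mem_closedBall_exists_eq_forall_mem_Ioo_hasDerivAt₀ 0
  have hγ : IsIntegralCurveAt γ (fun _ => Y) 0 := by
    filter_upwards [Ioo_mem_nhds (sub_lt_self 0 hε) (lt_add_of_pos_right 0 hε)] using hderiv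
  exact ⟨γ, rfl, hγ,
    eventually_eq_zero_of_isIntegralCurveAt_of_lieBracket_isBigO hγ hX hY hXY hp⟩

end IntegralCurve

theorem deriv_deriv_nonpos_of_isLocalMax {h : ℝ → ℝ} {t₀ : ℝ} (hmax : IsLocalMax h t₀)
    (hcont : ContinuousAt h t₀) : deriv (deriv h) t₀ ≤ 0 := by
  by_contra! hpos
  have hmin : IsLocalMin h t₀ := isLocalMin_of_deriv_deriv_pos hpos hmax.deriv_eq_zero hcont
  have hconst : h =ᶠ[𝓝 t₀] fun _ => h t₀ := by
    filter_upwards [hmax, hmin] with t hle hge using le_antisymm hle hge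
  have hzero : deriv (deriv h) t₀ = 0 := by simp [hconst.deriv.deriv_eq]
  exact hpos.ne' hzero

section RealInner

open scoped RealInnerProductSpace

variable {E : Type*} [NormedAddCommGroup E] [InnerProductSpace ℝ E]

theorem norm_sq_add_inner_nonpos_of_isLocalMax_norm {γ γ' : ℝ → E} {γ'' : E} {t₀ : ℝ}
    (hmax : IsLocalMax (fun t => ‖γ t‖) t₀) (hγ : ∀ᶠ t in 𝓝 t₀, HasDerivAt γ (γ' t) t)
    (hγ' : HasDerivAt γ' γ'' t₀) : ‖γ' t₀‖ ^ 2 + ⟪γ t₀, γ''⟫ ≤ 0 := by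
  have hderiv : deriv (‖γ ·‖ ^ 2) =ᶠ[𝓝 t₀] fun t => 2 * ⟪γ t, γ' t⟫ := by
    filter_upwards [hγ] with t ht using ht.norm_sq.deriv
  have hderiv₂ : deriv (deriv (‖γ ·‖ ^ 2)) t₀ = 2 * (‖γ' t₀‖ ^ 2 + ⟪γ t₀, γ''⟫) := by
    rw [hderiv.deriv_eq, ((hγ.self_of_nhds.inner ℝ hγ').const_mul 2).deriv,
      real_inner_self_eq_norm_sq, add_comm]
  have hmax_sq : IsLocalMax (‖γ ·‖ ^ 2) t₀ :=
    hmax.mono fun t ht => pow_le_pow_left₀ (norm_nonneg _) ht 2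
  linarith [deriv_deriv_nonpos_of_isLocalMax hmax_sq hγ.self_of_nhds.norm_sq.continuousAt]

theorem norm_sq_add_inner_fderiv_nonpos_of_isLocalMaxOn_norm [CompleteSpace E] {X Y : E → E} {p : E}
    (hX : ∀ᶠ q in 𝓝 p, DifferentiableAt ℝ X q) (hY : ContDiffAt ℝ 1 Y p)
    (hXY : lieBracket ℝ Y X =O[𝓝 p] X) (hp : X p = 0)
    (hmax : IsLocalMaxOn (‖·‖) {q | X q = 0} p) :
    ‖Y p‖ ^ 2 + ⟪p, fderiv ℝ Y p (Y p)⟫ ≤ 0 := by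
  obtain ⟨γ, rfl, hγ, hXγ⟩ :=
    exists_isIntegralCurveAt_eventually_eq_zero_of_lieBracket_isBigO hX hY hXY hp
  have htendsto : Tendsto γ (𝓝 0) (𝓝[{q | X q = 0}] (γ 0)) :=
    tendsto_nhdsWithin_iff.2 ⟨hγ.continuousAt, hXγ⟩
  exact norm_sq_add_inner_nonpos_of_isLocalMax_norm (htendsto.eventually hmax) hγ
    ((hY.differentiableAt one_ne_zero).hasFDerivAt.comp_hasDerivAt 0 hγ.hasDerivAt)

end RealInner

theorem lieBracket_isBigO_of_eq_smul {𝕜 E : Type*} [NontriviallyNormedField 𝕜]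
    [NormedAddCommGroup E] [NormedSpace 𝕜 E] {Ω : Set E} {X Y : E → E} {f : E → 𝕜}
    (hf : ContinuousOn f Ω) (hXY : ∀ q ∈ Ω, lieBracket 𝕜 Y X q = f q • X q) {p : E}
    (hΩ : Ω ∈ 𝓝 p) : lieBracket 𝕜 Y X =O[𝓝 p] X := by
  have hsmul : (fun q => f q • X q) =O[𝓝 p] X := by
    simpa using ((hf.continuousAt hΩ).isBigO_one 𝕜).smul (isBigO_refl X (𝓝 p))
  exact EventuallyEq.trans_isBigO (eventually_of_mem hΩ hXY) hsmul

theorem lieBracket_restrictScalars (𝕜 : Type*) {𝕜' E : Type*} [NontriviallyNormedField 𝕜]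
    [NontriviallyNormedField 𝕜'] [NormedAlgebra 𝕜 𝕜'] [NormedAddCommGroup E] [NormedSpace 𝕜 E]
    [NormedSpace 𝕜' E] [IsScalarTower 𝕜 𝕜' E] {V W : E → E} {x : E}
    (hV : DifferentiableAt 𝕜' V x) (hW : DifferentiableAt 𝕜' W x) :
    lieBracket 𝕜 V W x = lieBracket 𝕜' V W x := by
  simp only [lieBracket, hV.fderiv_restrictScalars 𝕜, hW.fderiv_restrictScalars 𝕜,
    ContinuousLinearMap.coe_restrictScalars']

section ComplexInner

open scoped ComplexInnerProductSpace

variable {E : Type*} [NormedAddCommGroup E] [InnerProductSpace ℂ E] [CompleteSpace E]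
  {X Y : E → E}

theorem norm_sq_add_re_inner_fderiv_nonpos_of_isLocalMaxOn_norm {p : E}
    (hX : ∀ᶠ q in 𝓝 p, DifferentiableAt ℂ X q) (hY : ∀ᶠ q in 𝓝 p, DifferentiableAt ℂ Y q)
    (hXY : lieBracket ℂ Y X =O[𝓝 p] X) (hp : X p = 0)
    (hmax : IsLocalMaxOn (‖·‖) {q | X q = 0} p) :
    ‖Y p‖ ^ 2 + (⟪p, fderiv ℂ Y p (Y p)⟫).re ≤ 0 := by
  have hbracket : lieBracket ℝ Y X =ᶠ[𝓝 p] lieBracket ℂ Y X := by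
    filter_upwards [hX, hY] with q hXq hYq using lieBracket_restrictScalars ℝ hYq hXq
  let _ : InnerProductSpace ℝ E := .rclikeToReal ℂ E
  have hreal := norm_sq_add_inner_fderiv_nonpos_of_isLocalMaxOn_norm
    (hX.mono fun _ hq => hq.restrictScalars ℝ)
    ((contDiffAt_one_of_eventually_differentiableAt hY).restrict_scalars ℝ)
    (hbracket.trans_isBigO hXY) hp hmax
  rwa [hY.self_of_nhds.fderiv_restrictScalars ℝ, real_inner_eq_re_inner ℂ] at hreal

theorem eq_zero_of_lieBracket_isBigO_of_isLocalMaxOn_norm {p : E}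
    (hX : ∀ᶠ q in 𝓝 p, DifferentiableAt ℂ X q) (hY : ∀ᶠ q in 𝓝 p, DifferentiableAt ℂ Y q)
    (hXY : lieBracket ℂ Y X =O[𝓝 p] X) (hp : X p = 0)
    (hmax : IsLocalMaxOn (‖·‖) {q | X q = 0} p) : Y p = 0 := by
  have hIXY : lieBracket ℂ (Complex.I • Y) X =O[𝓝 p] X := by
    refine EventuallyEq.trans_isBigO ?_ (hXY.const_smul_left Complex.I)
    filter_upwards [hY] with q hq using lieBracket_const_smul_left hq
  have hle := norm_sq_add_re_inner_fderiv_nonpos_of_isLocalMaxOn_norm hX hY hXY hp hmax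
  have hle_I := norm_sq_add_re_inner_fderiv_nonpos_of_isLocalMaxOn_norm hX
    (hY.mono fun _ hq => hq.const_smul Complex.I) hIXY hp hmax
  have hIY : fderiv ℂ (Complex.I • Y) p ((Complex.I • Y) p) = -fderiv ℂ Y p (Y p) := by
    rw [fderiv_const_smul hY.self_of_nhds]
    simp [smul_smul]
  rw [hIY, inner_neg_right, Complex.neg_re, Pi.smul_apply, norm_smul, Complex.norm_I, one_mul]
    at hle_I
  have hsq : ‖Y p‖ ^ 2 = 0 := le_antisymm (by linarith) (sq_nonneg _)
  simpa using hsq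

/-- A compact set of zeros of `X` with a neighborhood containing no further zeros: an `X`-block,
with the isolating neighborhood expressed through the filter `𝓝ˢ K` so that the notion also makes
sense in spaces that are not locally compact. -/
structure IsZeroBlock {E F : Type*} [TopologicalSpace E] [Zero F] (X : E → F) (K : Set E) :
    Prop where
  isCompact : IsCompact K
  eq_zero : ∀ p ∈ K, X p = 0
  isolated : ∀ᶠ q in 𝓝ˢ K, X q = 0 → q ∈ K

theorem isZeroBlock_of_isolating {E F : Type*} [TopologicalSpace E] [TopologicalSpace F] [T1Space F]
    [Zero F] {X : E → F} {U : Set E} (hU : IsOpen U) (hUcomp : IsCompact (closure U))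
    (hX : ContinuousOn X (closure U)) (hXU : {p ∈ closure U | X p = 0} ⊆ U) :
    IsZeroBlock X {p ∈ closure U | X p = 0} where
  isCompact := hUcomp.of_isClosed_subset
    (hX.preimage_isClosed_of_isClosed isClosed_closure isClosed_singleton) (sep_subset _ _)
  eq_zero _ hp := hp.2
  isolated := by
    filter_upwards [hU.mem_nhdsSet.2 hXU] with q hq hXq using ⟨subset_closure hq, hXq⟩

theorem zero_of_tracking_essential_block_complex_general {Ω K : Set E} (hΩ : IsOpen Ω)
    (hX : DifferentiableOn ℂ X Ω) (hY : DifferentiableOn ℂ Y Ω) (hKΩ : K ⊆ Ω)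
    (hXY : ∀ p ∈ K, lieBracket ℂ Y X =O[𝓝 p] X) (hK : IsZeroBlock X K) (hne : K.Nonempty) :
    ∃ p ∈ K, Y p = 0 := by
  obtain ⟨p, hpK, hpmax⟩ := hK.isCompact.exists_isMaxOn hne continuous_norm.continuousOn
  have hΩp : Ω ∈ 𝓝 p := hΩ.mem_nhds (hKΩ hpK)
  have hmax : IsLocalMaxOn (‖·‖) {q | X q = 0} p := by
    refine eventually_nhdsWithin_iff.2 ?_
    filter_upwards [hK.isolated.filter_mono (nhds_le_nhdsSet hpK)] with q hq hXq
      using hpmax (hq hXq)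
  exact ⟨p, hpK, eq_zero_of_lieBracket_isBigO_of_isLocalMaxOn_norm
    (hX.eventually_differentiableAt hΩp) (hY.eventually_differentiableAt hΩp) (hXY p hpK)
    (hK.eq_zero p hpK) hmax⟩

end ComplexInner

/-- **Hirsch, Theorem 1.2 (complex case, local form).**
If `Y` tracks `X` (both holomorphic on an open set `Ω ⊆ ℂ²`) and `K` is an essential
`X`-block with connected isolating neighborhood `U`, then `Y` vanishes somewhere on `K`. -/
theorem zero_of_tracking_essential_block_complex
    (Ω : Set (EuclideanSpace ℂ (Fin 2))) (hΩ : IsOpen Ω)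
    (X Y : EuclideanSpace ℂ (Fin 2) → EuclideanSpace ℂ (Fin 2))
    (hX : DifferentiableOn ℂ X Ω) (hY : DifferentiableOn ℂ Y Ω)
    (f : EuclideanSpace ℂ (Fin 2) → ℂ) (hf : ContinuousOn f Ω)
    (htrack : ∀ p ∈ Ω, fderiv ℂ X p (Y p) - fderiv ℂ Y p (X p) = f p • X p)
    (U : Set (EuclideanSpace ℂ (Fin 2))) (hUopen : IsOpen U) (hUconn : IsConnected U)
    (hUcomp : IsCompact (closure U)) (hUΩ : closure U ⊆ Ω)
    (K : Set (EuclideanSpace ℂ (Fin 2)))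
    (hK : K = {p ∈ closure U | X p = 0}) (hKU : K ⊆ U)
    (hess : ∃ ε > 0, ∀ X' : EuclideanSpace ℂ (Fin 2) → EuclideanSpace ℂ (Fin 2),
      ContinuousOn X' (closure U) → (∀ p ∈ closure U, ‖X' p - X p‖ < ε) →
      ∃ p ∈ closure U, X' p = 0) :
    ∃ p ∈ K, Y p = 0 := by
  obtain ⟨ε, hε, hess⟩ := hess
  obtain ⟨p₀, hp₀⟩ := hess X (hX.continuousOn.mono hUΩ) (fun p _ => by simpa using hε)
  subst hK
  exact zero_of_tracking_essential_block_complex_general hΩ hX hY (fun p hp => hUΩ hp.1)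
    (fun p hp => lieBracket_isBigO_of_eq_smul hf htrack (hΩ.mem_nhds (hUΩ hp.1)))
    (isZeroBlock_of_isolating hUopen hUcomp (hX.continuousOn.mono hUΩ) hKU) ⟨p₀, hp₀⟩
end
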